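/- Fix π ∈ (0,1/2), m > 0, δ > 0, and let ρ* = ρ*(π,m,δ) be the unique ρ ∈ (0,1) satisfying π·δ·g(ρ/(2πmδ)) + (1−π)·δ·g(ρ/(2(1−π)mδ)) = 1 − ρ². Set N := g₁⁻¹(ρ*/(2πmδ)) + ρ*·m and D := g₁⁻¹(ρ*/(2(1−π)mδ)) + ρ*·m, and for τ > 0 define β₀(τ) := (τ·D − N)/(1 + τ) and Err_b(τ) := ½·(Φ(−ρ*·m − β₀(τ)) + Φ(−ρ*·m + β₀(τ))). Assume N > 0 and D > 0. Then τ^opt := N/D > 0 satisfies β₀(τ^opt) = 0 and Err_b(τ^opt) = Φ(−ρ*·m), and Err_b(τ) > Φ(−ρ*·m) for every τ > 0 with τ ≠ τ^opt; i.e., τ^opt is the unique minimizer of the asymptotic balanced error over τ ∈ (0,∞). -/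

import Mathlib

open MeasureTheory

/-- The standard normal density. -/
noncomputable def normPDF (x : ℝ) : ℝ := Real.exp (-x ^ 2 / 2) / Real.sqrt (2 * Real.pi)

/-- The standard normal cumulative distribution function. -/
noncomputable def normCDF (x : ℝ) : ℝ := ∫ t in Set.Iic x, normPDF t

/-- `g₁(x) = x·Φ(x) + φ(x)`, equal to `E[(Z+x)₊]` for standard normal `Z`. -/
noncomputable def g1 (x : ℝ) : ℝ := x * normCDF x + normPDF x

/-- `g₂(x) = (x²+1)·Φ(x) + x·φ(x)`, equal to `E[(Z+x)₊²]` for standard normal `Z`. -/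
noncomputable def g2 (x : ℝ) : ℝ := (x ^ 2 + 1) * normCDF x + x * normPDF x

/-- The inverse of `g₁` (on its range `(0,∞)`). -/
noncomputable def g1inv : ℝ → ℝ := Function.invFun g1

/-- `g = g₂ ∘ g₁⁻¹`. -/
noncomputable def gfn (t : ℝ) : ℝ := g2 (g1inv t)

/-!
For `b > 0`, moving the intercept from `0` to `b` raises one class error by the noise mass of
`[-c, -c + b]` and lowers the other by that of `[-c - b, -c]`, where `c = ρ * m`. Reflecting at
`-c` pairs the points `-c + s` and `-c - s`; the former is closer to the origin, where the density
is larger, so the increase exceeds the decrease. Hence the balanced error is minimal exactly when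
the intercept vanishes, that is, at `τ = N / D`.
-/

/-- The limiting intercept `β₀(τ)` of the margin-rebalanced max-margin classifier, in terms of
`N` and `D`; the value at `τ = -1` is junk. -/
noncomputable def rebalancedIntercept (N D τ : ℝ) : ℝ := (τ * D - N) / (1 + τ)

/-- The average of the two class errors of a linear classifier with margin `c` and intercept `b`,
when the noise has cumulative distribution function `F`. -/
noncomputable def balancedError (F : ℝ → ℝ) (c b : ℝ) : ℝ :=
  (1 / 2) * (F (-c - b) + F (-c + b))

lemma rebalancedIntercept_eq_zero_iff {N D τ : ℝ} (hD : D ≠ 0) (hτ : 1 + τ ≠ 0) :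
    rebalancedIntercept N D τ = 0 ↔ τ = N / D := by
  rw [rebalancedIntercept, div_eq_zero_iff, or_iff_left hτ, sub_eq_zero, eq_div_iff hD]

@[simp]
lemma balancedError_zero (F : ℝ → ℝ) (c : ℝ) : balancedError F c 0 = F (-c) := by
  rw [balancedError, sub_zero, add_zero]
  ring

@[simp]
lemma balancedError_neg (F : ℝ → ℝ) (c b : ℝ) :
    balancedError F c (-b) = balancedError F c b := by
  rw [balancedError, balancedError, sub_neg_eq_add, ← sub_eq_add_neg, add_comm (F _)]

section UnimodalDensity

variable {f : ℝ → ℝ} {c : ℝ}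

lemma integral_left_lt_integral_right (hf : Integrable f)
    (hdecay : ∀ x y, |x| < |y| → f y < f x) (hc : 0 < c) {b : ℝ} (hb : 0 < b) :
    ∫ t in (-c - b)..(-c), f t < ∫ t in (-c)..(-c + b), f t := by
  have integrable_left : IntervalIntegrable (fun s ↦ f (-c - s)) volume 0 b :=
    (hf.comp_sub_left (-c)).intervalIntegrable
  have integrable_right : IntervalIntegrable (fun s ↦ f (-c + s)) volume 0 b :=
    (hf.comp_add_left (-c)).intervalIntegrable
  have integrand_pos : ∀ s ∈ Set.Ioo 0 b, 0 < f (-c + s) - f (-c - s) := fun s hs ↦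
    sub_pos.2 <| hdecay _ _ <| sq_lt_sq.1 <| by linarith [mul_pos hc hs.1]
  have integral_pos : 0 < ∫ s in 0..b, (f (-c + s) - f (-c - s)) :=
    intervalIntegral.intervalIntegral_pos_of_pos_on
      (integrable_right.sub integrable_left) integrand_pos hb
  rw [intervalIntegral.integral_sub integrable_right integrable_left,
    intervalIntegral.integral_comp_add_left, intervalIntegral.integral_comp_sub_left,
    add_zero, sub_zero] at integral_pos
  exact sub_pos.1 integral_pos

lemma lt_balancedError (hf : Integrable f) (hdecay : ∀ x y, |x| < |y| → f y < f x)
    (hc : 0 < c) {b : ℝ} (hb : b ≠ 0) :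
    ∫ t in Set.Iic (-c), f t < balancedError (fun x ↦ ∫ t in Set.Iic x, f t) c b := by
  wlog b_pos : 0 < b generalizing b
  · rw [← balancedError_neg]
    exact this (neg_ne_zero.2 hb) (neg_pos.2 (hb.lt_of_le (not_lt.1 b_pos)))
  have increment (x y : ℝ) :
      (∫ t in Set.Iic y, f t) - ∫ t in Set.Iic x, f t = ∫ t in x..y, f t :=
    intervalIntegral.integral_Iic_sub_Iic hf.integrableOn hf.integrableOn
  have increment_lt := integral_left_lt_integral_right hf hdecay hc b_pos
  rw [← increment, ← increment] at increment_lt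
  rw [balancedError]
  linarith

theorem stmt_16_general (hf : Integrable f) (hdecay : ∀ x y, |x| < |y| → f y < f x)
    (hc : 0 < c) {N D : ℝ} (hN : 0 < N) (hD : 0 < D) :
    let F := fun x ↦ ∫ t in Set.Iic x, f t
    0 < N / D ∧
    rebalancedIntercept N D (N / D) = 0 ∧
    balancedError F c (rebalancedIntercept N D (N / D)) = F (-c) ∧
    ∀ τ, 0 < τ → τ ≠ N / D → F (-c) < balancedError F c (rebalancedIntercept N D τ) := by
  intro F
  have ratio_pos : 0 < N / D := div_pos hN hD
  have intercept_eq_zero : rebalancedIntercept N D (N / D) = 0 :=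
    (rebalancedIntercept_eq_zero_iff hD.ne' (by positivity)).2 rfl
  refine ⟨ratio_pos, intercept_eq_zero, ?_, fun τ hτ hne ↦ ?_⟩
  · rw [intercept_eq_zero, balancedError_zero]
  · exact lt_balancedError hf hdecay hc
      ((rebalancedIntercept_eq_zero_iff hD.ne' (by positivity)).not.2 hne)

end UnimodalDensity

lemma normPDF_eq_gaussianPDFReal : normPDF = ProbabilityTheory.gaussianPDFReal 0 1 := by
  ext x
  simp [normPDF, ProbabilityTheory.gaussianPDFReal, div_eq_inv_mul]

lemma integrable_normPDF : Integrable normPDF :=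
  normPDF_eq_gaussianPDFReal ▸ ProbabilityTheory.integrable_gaussianPDFReal 0 1

lemma normPDF_lt_normPDF {x y : ℝ} (h : |x| < |y|) : normPDF y < normPDF x := by
  have sq_lt : x ^ 2 < y ^ 2 := sq_lt_sq.2 h
  unfold normPDF
  gcongr

/-- The optimal rebalancing parameter `τ^opt = N/D` zeroes the
limiting intercept and uniquely minimizes the asymptotic balanced error over
`τ ∈ (0,∞)`, where the minimum value is `Φ(−ρ*·m)`. -/
theorem stmt_16 (p m δ ρ : ℝ)
    (hp : p ∈ Set.Ioo (0 : ℝ) (1 / 2)) (hm : 0 < m) (hδ : 0 < δ)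
    (hρ : ρ ∈ Set.Ioo (0 : ℝ) 1)
    (heq : p * δ * gfn (ρ / (2 * p * m * δ)) +
        (1 - p) * δ * gfn (ρ / (2 * (1 - p) * m * δ)) = 1 - ρ ^ 2)
    (N D : ℝ)
    (hN : N = g1inv (ρ / (2 * p * m * δ)) + ρ * m)
    (hD : D = g1inv (ρ / (2 * (1 - p) * m * δ)) + ρ * m)
    (hNpos : 0 < N) (hDpos : 0 < D)
    (β₀ Errb : ℝ → ℝ)
    (hβ₀ : ∀ τ, β₀ τ = (τ * D - N) / (1 + τ))
    (hErrb : ∀ τ, Errb τ =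
      (1 / 2) * (normCDF (-(ρ * m) - β₀ τ) + normCDF (-(ρ * m) + β₀ τ))) :
    0 < N / D ∧
    β₀ (N / D) = 0 ∧
    Errb (N / D) = normCDF (-(ρ * m)) ∧
    ∀ τ : ℝ, 0 < τ → τ ≠ N / D → normCDF (-(ρ * m)) < Errb τ := by
  simp only [hErrb, hβ₀]
  exact stmt_16_general integrable_normPDF (fun _ _ ↦ normPDF_lt_normPDF) (mul_pos hρ.1 hm)
    hNpos hDpos
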